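/- Let α > −1 and n ≥ 1, let ψ be analytic on 𝔻, not identically 0, and φ a nonconstant analytic self-map of 𝔻, with D_{ψ,φ,n} bounded on A_α². Then D_{ψ,φ,n} is self-adjoint if and only if ψ(z) = a z^n/(n! (1 − conj(c) z)^{n+α+2}) and φ(z) = c + b z/(1 − conj(c) z), where a = ψ^{(n)}(0) and b = φ′(0) are both nonzero real numbers and c = φ(0) ∈ 𝔻. -/

import Mathlib

open Complex Metric Set

noncomputable section

/-- The open unit disk in `ℂ`. -/
def unitDisk : Set ℂ := Metric.ball 0 1

/-- `wb2 α j` is `β(j)² = j!·Γ(α+2)/Γ(j+α+2)`, the square of the norm of `z^j` in `A_α²`. -/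
def wb2 (α : ℝ) (j : ℕ) : ℝ :=
  (j.factorial : ℝ) * Real.Gamma (α + 2) / Real.Gamma ((j : ℝ) + α + 2)

/-- The `j`-th Taylor coefficient of `f` at `0`. -/
def tcoeff (f : ℂ → ℂ) (j : ℕ) : ℂ := iteratedDeriv j f 0 / (j.factorial : ℂ)

/-- An abstract model of the weighted Bergman space `A_α²`: a complex Hilbert space `H`
whose elements are (identified with) the analytic functions on the unit disk with
square-summable weighted Taylor coefficients, with the weighted `ℓ²` inner product. -/
structure BergmanModel (α : ℝ) (H : Type) [NormedAddCommGroup H]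
    [InnerProductSpace ℂ H] where
  emb : H →ₗ[ℂ] (ℂ → ℂ)
  analyticOn : ∀ f : H, AnalyticOnNhd ℂ (emb f) unitDisk
  summable_norm : ∀ f : H, Summable (fun j => ‖tcoeff (emb f) j‖ ^ 2 * wb2 α j)
  inj : ∀ f g : H, Set.EqOn (emb f) (emb g) unitDisk → f = g
  exists_rep : ∀ F : ℂ → ℂ, AnalyticOnNhd ℂ F unitDisk →
      Summable (fun j => ‖tcoeff F j‖ ^ 2 * wb2 α j) →
      ∃ f : H, Set.EqOn (emb f) F unitDisk
  inner_eq : ∀ f g : H,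
      (@inner ℂ H _ f g) =
        ∑' j : ℕ, (starRingEnd ℂ) (tcoeff (emb f) j) * tcoeff (emb g) j * (wb2 α j : ℂ)

/-- The derivative-evaluation kernel `K_w^{(m)}(z) = m!·z^m / (β(m)²·(1-conj(w)·z)^(m+α+2))`. -/
def kern (α : ℝ) (m : ℕ) (w z : ℂ) : ℂ :=
  (m.factorial : ℂ) * z ^ m /
    ((wb2 α m : ℂ) * (1 - (starRingEnd ℂ) w * z) ^ ((m : ℂ) + (α : ℂ) + 2))

open scoped ComplexConjugate InnerProductSpace

/-! A bounded operator is self-adjoint as soon as it is symmetric on the reproducing kernels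
`K_w`, which are total. Since `(D_{ψ,φ,n} K_w)(z) = ψ(z) K_w⁽ⁿ⁾(φ(z))`, this symmetry reads, with
`s = n + α + 2`,
`ψ(z) w̄ⁿ (1 - conj(φ(w)) z)ˢ = conj(ψ(w)) zⁿ (1 - w̄ φ(z))ˢ` for all `z, w ∈ 𝔻`.
Freezing `w` shows that `ψ = zⁿ g` with `g` continuous, and `zⁿ w̄ⁿ` cancels by density. Putting
`w = 0` then yields `g = r / (1 - conj(c) z)ˢ` with `r = g(0)` real and `c = φ(0)`, and
differentiating what remains in `z` at `0` yields `φ(w) = c + conj(φ'(0)) w / (1 - conj(c) w)`,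
whose derivative at `0` shows in turn that `φ'(0)` is real. -/

section HilbertSpace

variable {𝕜 E ι : Type*} [RCLike 𝕜] [NormedAddCommGroup E] [InnerProductSpace 𝕜 E]
  [CompleteSpace E]

theorem adjoint_eq_self_iff_of_total {K : ι → E} (hK : ∀ f, (∀ i, ⟪K i, f⟫_𝕜 = 0) → f = 0)
    (T : E →L[𝕜] E) :
    ContinuousLinearMap.adjoint T = T ↔ ∀ i j, ⟪K i, T (K j)⟫_𝕜 = ⟪T (K i), K j⟫_𝕜 := by
  have ext_inner {f g : E} (h : ∀ i, ⟪K i, f⟫_𝕜 = ⟪K i, g⟫_𝕜) : f = g :=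
    sub_eq_zero.1 <| hK _ fun i => by rw [inner_sub_right, h, sub_self]
  refine ⟨fun h i j => by rw [← ContinuousLinearMap.adjoint_inner_right, h], fun h => ?_⟩
  have adjoint_K (j : ι) : ContinuousLinearMap.adjoint T (K j) = T (K j) :=
    ext_inner fun i => by rw [ContinuousLinearMap.adjoint_inner_right, h]
  ext f
  refine ext_inner fun i => ?_
  rw [ContinuousLinearMap.adjoint_inner_right, ← adjoint_K,
    ContinuousLinearMap.adjoint_inner_left]

end HilbertSpace

section ComplexAnalysis

lemma cpow_mul_cpow_of_re_pos {x y : ℂ} (hx : 0 < x.re) (hy : 0 < y.re) (s : ℂ) :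
    x ^ s * y ^ s = (x * y) ^ s := by
  have hx0 : x ≠ 0 := slitPlane_ne_zero (Or.inl hx)
  have hy0 : y ≠ 0 := slitPlane_ne_zero (Or.inl hy)
  have arg_x := abs_lt.1 (abs_arg_lt_pi_div_two_iff.2 (Or.inl hx))
  have arg_y := abs_lt.1 (abs_arg_lt_pi_div_two_iff.2 (Or.inl hy))
  rw [cpow_def_of_ne_zero hx0, cpow_def_of_ne_zero hy0, cpow_def_of_ne_zero (mul_ne_zero hx0 hy0),
    Complex.log_mul hx0 hy0 ⟨by linarith, by linarith⟩, ← Complex.exp_add, add_mul]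

lemma iteratedDeriv_pow_mul_zero {𝕜 : Type*} [NontriviallyNormedField 𝕜] {n : ℕ} {g : 𝕜 → 𝕜}
    (hg : ContDiffAt 𝕜 n g 0) :
    iteratedDeriv n (fun z => z ^ n * g z) 0 = n.factorial * g 0 := by
  rw [iteratedDeriv_fun_mul (by fun_prop) hg, Finset.sum_range_succ, Finset.sum_eq_zero]
  · rw [iteratedDeriv_fun_pow_zero]
    simp
  · intro i hi
    rw [iteratedDeriv_fun_pow_zero, if_neg (Finset.mem_range.1 hi).ne]
    simp

end ComplexAnalysis

section UnitDisk

lemma mem_unitDisk_iff {z : ℂ} : z ∈ unitDisk ↔ ‖z‖ < 1 := mem_ball_zero_iff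

lemma isOpen_unitDisk : IsOpen unitDisk := isOpen_ball

lemma zero_mem_unitDisk : (0 : ℂ) ∈ unitDisk := mem_ball_self one_pos

lemma unitDisk_mem_nhds_zero : unitDisk ∈ nhds (0 : ℂ) :=
  isOpen_unitDisk.mem_nhds zero_mem_unitDisk

lemma unitDisk_subset_closure_diff_zero : unitDisk ⊆ closure (unitDisk \ {0}) :=
  (dense_compl_singleton 0).open_subset_closure_inter isOpen_unitDisk

lemma eqOn_unitDisk_prod_of_eqOn_diff_zero {Y : Type*} [TopologicalSpace Y] [T2Space Y]
    {F G : ℂ × ℂ → Y} (hF : ContinuousOn F (unitDisk ×ˢ unitDisk))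
    (hG : ContinuousOn G (unitDisk ×ˢ unitDisk))
    (h : EqOn F G ((unitDisk \ {0}) ×ˢ (unitDisk \ {0}))) :
    EqOn F G (unitDisk ×ˢ unitDisk) :=
  h.of_subset_closure hF hG (prod_mono sdiff_subset sdiff_subset) <| by
    simpa only [closure_prod_eq] using
      prod_mono unitDisk_subset_closure_diff_zero unitDisk_subset_closure_diff_zero

lemma one_sub_conj_mul_re_pos {w z : ℂ} (hw : w ∈ unitDisk) (hz : z ∈ unitDisk) :
    0 < (1 - conj w * z).re := by
  have norm_lt : ‖conj w * z‖ < 1 := by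
    rw [norm_mul, norm_conj]
    exact mul_lt_one_of_nonneg_of_lt_one_left (norm_nonneg w) (mem_unitDisk_iff.1 hw)
      (mem_unitDisk_iff.1 hz).le
  simpa using (re_le_norm (conj w * z)).trans_lt norm_lt

lemma one_sub_conj_mul_mem_slitPlane {w z : ℂ} (hw : w ∈ unitDisk) (hz : z ∈ unitDisk) :
    1 - conj w * z ∈ slitPlane := Or.inl (one_sub_conj_mul_re_pos hw hz)

lemma one_sub_conj_mul_ne_zero {w z : ℂ} (hw : w ∈ unitDisk) (hz : z ∈ unitDisk) :
    1 - conj w * z ≠ 0 := slitPlane_ne_zero (one_sub_conj_mul_mem_slitPlane hw hz)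

lemma hasSum_tcoeff {f : ℂ → ℂ} (hf : AnalyticOnNhd ℂ f unitDisk) {z : ℂ} (hz : z ∈ unitDisk) :
    HasSum (fun j => tcoeff f j * z ^ j) (f z) := by
  refine (hasSum_taylorSeries_on_ball hf.differentiableOn hz).congr_fun fun j => ?_
  rw [tcoeff, sub_zero, smul_eq_mul, smul_eq_mul]
  ring

lemma tcoeff_congr {f g : ℂ → ℂ} (h : EqOn f g unitDisk) : tcoeff f = tcoeff g := by
  ext j
  simp only [tcoeff, h.iteratedDeriv_of_isOpen isOpen_unitDisk j zero_mem_unitDisk]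

end UnitDisk

/-- The power `(1 - conj(w) z)ˢ`, principal branch, in which the kernels of the weighted Bergman
spaces are expressed. -/
def kernDenom (s : ℝ) (w z : ℂ) : ℂ := (1 - conj w * z) ^ (s : ℂ)

section KernDenom

variable {s : ℝ} {w z : ℂ}

@[simp] lemma kernDenom_zero_left (s : ℝ) (z : ℂ) : kernDenom s 0 z = 1 := by simp [kernDenom]

@[simp] lemma kernDenom_zero_right (s : ℝ) (w : ℂ) : kernDenom s w 0 = 1 := by simp [kernDenom]

lemma kernDenom_neg (s : ℝ) (w z : ℂ) : kernDenom (-s) w z = (kernDenom s w z)⁻¹ := by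
  rw [kernDenom, ofReal_neg, cpow_neg, kernDenom]

lemma kernDenom_ne_zero (s : ℝ) (hw : w ∈ unitDisk) (hz : z ∈ unitDisk) : kernDenom s w z ≠ 0 :=
  fun h => one_sub_conj_mul_ne_zero hw hz ((cpow_eq_zero_iff _ _).1 h).1

lemma kernDenom_sub_one_mul (s : ℝ) (hw : w ∈ unitDisk) (hz : z ∈ unitDisk) :
    kernDenom (s - 1) w z * (1 - conj w * z) = kernDenom s w z := by
  have h := one_sub_conj_mul_ne_zero hw hz
  rw [kernDenom, ofReal_sub, ofReal_one, cpow_sub _ _ h, cpow_one, div_mul_cancel₀ _ h, kernDenom]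

lemma conj_kernDenom (s : ℝ) (hw : w ∈ unitDisk) (hz : z ∈ unitDisk) :
    conj (kernDenom s w z) = kernDenom s z w := by
  have harg := slitPlane_arg_ne_pi (one_sub_conj_mul_mem_slitPlane hw hz)
  rw [kernDenom, ← conj_ofReal, ← conj_cpow _ _ harg]
  simp [kernDenom, mul_comm]

lemma continuousOn_kernDenom {X : Type*} [TopologicalSpace X] {t : Set X} {f g : X → ℂ}
    (hf : ContinuousOn f t) (hg : ContinuousOn g t) (hft : MapsTo f t unitDisk)
    (hgt : MapsTo g t unitDisk) : ContinuousOn (fun x => kernDenom s (f x) (g x)) t :=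
  (continuousOn_const.sub ((continuous_conj.comp_continuousOn hf).mul hg)).cpow_const
    fun _ hx => one_sub_conj_mul_mem_slitPlane (hft hx) (hgt hx)

lemma analyticOnNhd_kernDenom (s : ℝ) (hw : w ∈ unitDisk) :
    AnalyticOnNhd ℂ (kernDenom s w) unitDisk := fun _ hz =>
  AnalyticAt.cpow (by fun_prop) analyticAt_const (one_sub_conj_mul_mem_slitPlane hw hz)

lemma hasDerivAt_kernDenom (s : ℝ) {f : ℂ → ℂ} {f' : ℂ} (hw : w ∈ unitDisk)
    (hfz : f z ∈ unitDisk) (hf : HasDerivAt f f' z) :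
    HasDerivAt (fun x => kernDenom s w (f x))
      (-(s * conj w * kernDenom (s - 1) w (f z) * f')) z := by
  refine (((hf.const_mul (conj w)).const_sub 1).cpow_const (c := s)
    (one_sub_conj_mul_mem_slitPlane hw hfz)).congr_deriv ?_
  rw [kernDenom, ofReal_sub, ofReal_one]
  ring

end KernDenom

section Kernel

variable {α : ℝ} {w z : ℂ}

lemma wb2_pos (hα : -2 < α) (j : ℕ) : 0 < wb2 α j := by
  have hj : 0 < (j : ℝ) + α + 2 := by linarith [(j.cast_nonneg : (0 : ℝ) ≤ j)]
  have hfact : (0 : ℝ) < j.factorial := by exact_mod_cast j.factorial_pos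
  exact div_pos (mul_pos hfact (Real.Gamma_pos_of_pos (by linarith))) (Real.Gamma_pos_of_pos hj)

lemma wb2_zero (hα : -2 < α) : wb2 α 0 = 1 := by
  simpa [wb2] using div_self (Real.Gamma_pos_of_pos (by linarith : 0 < α + 2)).ne'

lemma wb2_succ (hα : -2 < α) (j : ℕ) : (j + α + 2) * wb2 α (j + 1) = (j + 1) * wb2 α j := by
  have hj : 0 < (j : ℝ) + α + 2 := by linarith [(j.cast_nonneg : (0 : ℝ) ≤ j)]
  have hΓ := (Real.Gamma_pos_of_pos hj).ne'
  have Gamma_succ : Real.Gamma ((j + 1 : ℕ) + α + 2) = (j + α + 2) * Real.Gamma (j + α + 2) := by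
    rw [← Real.Gamma_add_one hj.ne']
    push_cast
    ring_nf
  rw [wb2, wb2, Gamma_succ, Nat.factorial_succ]
  push_cast
  field_simp

lemma kern_eq (α : ℝ) (m : ℕ) (w z : ℂ) :
    kern α m w z = m.factorial * z ^ m / (wb2 α m * kernDenom (m + α + 2) w z) := by
  simp [kern, kernDenom]

lemma conj_kern (m : ℕ) (hw : w ∈ unitDisk) (hz : z ∈ unitDisk) :
    conj (kern α m z w) =
      m.factorial / wb2 α m * conj w ^ m * kernDenom (-(m + α + 2)) w z := by
  simp only [kern_eq, map_div₀, map_mul, map_pow, map_natCast, conj_ofReal, conj_kernDenom _ hz hw,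
    kernDenom_neg]
  ring

lemma kern_zero_eq (hα : -2 < α) (w : ℂ) : kern α 0 w = kernDenom (-(α + 2)) w := by
  ext z
  rw [kern_eq, kernDenom_neg, wb2_zero hα]
  simp

lemma iteratedDeriv_kern_zero (hα : -2 < α) (hw : w ∈ unitDisk) (hz : z ∈ unitDisk) (m : ℕ) :
    iteratedDeriv m (kern α 0 w) z = conj (kern α m z w) := by
  induction m generalizing z with
  | zero => simp only [iteratedDeriv_zero, kern_zero_eq hα, conj_kernDenom _ hz hw]
  | succ m ih =>
    have ih_nhds : iteratedDeriv m (kern α 0 w) =ᶠ[nhds z] fun z =>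
        m.factorial / wb2 α m * conj w ^ m * kernDenom (-(m + α + 2)) w z := by
      filter_upwards [isOpen_unitDisk.mem_nhds hz] with y hy
      rw [ih hy, conj_kern m hw hy]
    have wb2_ratio : ((m + α + 2 : ℝ) : ℂ) / wb2 α m = (m + 1) / wb2 α (m + 1) := by
      rw [div_eq_div_iff] <;> norm_cast
      exacts [mod_cast wb2_succ hα m, (wb2_pos hα m).ne', (wb2_pos hα _).ne']
    have hexp : -((m : ℝ) + α + 2) - 1 = -((m + 1 : ℕ) + α + 2) := by push_cast; ring
    have hderiv := (hasDerivAt_kernDenom (-(m + α + 2)) hw hz (hasDerivAt_id z)).const_mul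
      ((m.factorial : ℂ) / wb2 α m * conj w ^ m)
    rw [iteratedDeriv_succ, ih_nhds.deriv_eq, conj_kern (m + 1) hw hz, ← hexp, Nat.factorial_succ]
    refine hderiv.deriv.trans ?_
    rw [ofReal_neg, id_eq]
    push_cast at wb2_ratio ⊢
    linear_combination m.factorial * conj w ^ (m + 1) *
      kernDenom (-(m + α + 2) - 1) w z * wb2_ratio

lemma tcoeff_kern_zero_mul_wb2 (hα : -2 < α) (hw : w ∈ unitDisk) (j : ℕ) :
    tcoeff (kern α 0 w) j * wb2 α j = conj w ^ j := by
  have hj : (j.factorial : ℂ) ≠ 0 := by exact_mod_cast j.factorial_ne_zero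
  have hwb : (wb2 α j : ℂ) ≠ 0 := by exact_mod_cast (wb2_pos hα j).ne'
  rw [tcoeff, iteratedDeriv_kern_zero hα hw zero_mem_unitDisk, conj_kern j hw zero_mem_unitDisk,
    kernDenom_zero_right]
  field_simp

lemma analyticOnNhd_kern_zero (hα : -2 < α) (hw : w ∈ unitDisk) :
    AnalyticOnNhd ℂ (kern α 0 w) unitDisk := by
  rw [kern_zero_eq hα]
  exact analyticOnNhd_kernDenom _ hw

lemma summable_tcoeff_kern_zero (hα : -2 < α) (hw : w ∈ unitDisk) :
    Summable fun j => ‖tcoeff (kern α 0 w) j‖ ^ 2 * wb2 α j := by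
  refine (hasSum_tcoeff (analyticOnNhd_kern_zero hα hw) hw).summable.norm.congr fun j => ?_
  have norm_pow_eq : ‖w ^ j‖ = ‖tcoeff (kern α 0 w) j‖ * wb2 α j := by
    rw [norm_pow, ← norm_conj, ← norm_pow, ← tcoeff_kern_zero_mul_wb2 hα hw, norm_mul, norm_real,
      Real.norm_of_nonneg (wb2_pos hα j).le]
  rw [norm_mul, norm_pow_eq]
  ring

end Kernel

/-- The identity `ψ(z) w̄ⁿ (1 - conj(φ(w)) z)ˢ = conj(ψ(w)) zⁿ (1 - w̄ φ(z))ˢ` on `𝔻 × 𝔻`. For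
`s = n + α + 2` it expresses, with denominators cleared, that `⟪K_z, D_{ψ,φ,n} K_w⟫` is Hermitian
in `(z, w)`, where `K_w` denotes the reproducing kernels of `A_α²`. -/
def KernelSymmetric (s : ℝ) (n : ℕ) (ψ φ : ℂ → ℂ) : Prop :=
  ∀ z ∈ unitDisk, ∀ w ∈ unitDisk,
    ψ z * conj w ^ n * kernDenom s (φ w) z = conj (ψ w) * z ^ n * kernDenom s w (φ z)

namespace BergmanModel

variable {α : ℝ} {H : Type} [NormedAddCommGroup H] [InnerProductSpace ℂ H]

/-- The reproducing kernel `K_w` of `A_α²` as an element of the model. -/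
def reproducingKernel (M : BergmanModel α H) (hα : -2 < α) (w : unitDisk) : H :=
  (M.exists_rep _ (analyticOnNhd_kern_zero hα w.2) (summable_tcoeff_kern_zero hα w.2)).choose

variable (M : BergmanModel α H)

lemma emb_reproducingKernel (hα : -2 < α) (w : unitDisk) :
    EqOn (M.emb (M.reproducingKernel hα w)) (kern α 0 w) unitDisk :=
  (M.exists_rep _ (analyticOnNhd_kern_zero hα w.2) (summable_tcoeff_kern_zero hα w.2)).choose_spec

lemma inner_reproducingKernel_left (hα : -2 < α) (w : unitDisk) (f : H) :
    ⟪M.reproducingKernel hα w, f⟫_ℂ = M.emb f w := by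
  rw [M.inner_eq, ← (hasSum_tcoeff (M.analyticOn f) w.2).tsum_eq]
  congr 1
  ext j
  have conj_coeff := congrArg conj (tcoeff_kern_zero_mul_wb2 hα w.2 j)
  rw [map_mul, map_pow, conj_conj, conj_ofReal] at conj_coeff
  rw [tcoeff_congr (M.emb_reproducingKernel hα w), ← conj_coeff]
  ring

lemma eq_zero_of_inner_reproducingKernel (hα : -2 < α) {f : H}
    (hf : ∀ w, ⟪M.reproducingKernel hα w, f⟫_ℂ = 0) : f = 0 := by
  refine M.inj _ _ fun w hw => ?_
  rw [← M.inner_reproducingKernel_left hα ⟨w, hw⟩, hf, map_zero, Pi.zero_apply]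

variable {n : ℕ} {ψ φ : ℂ → ℂ} {T : H →L[ℂ] H}

lemma inner_reproducingKernel_apply (hα : -2 < α) (hφ : MapsTo φ unitDisk unitDisk)
    (hT : ∀ f : H, ∀ z ∈ unitDisk, M.emb (T f) z = ψ z * iteratedDeriv n (M.emb f) (φ z))
    (z w : unitDisk) :
    ⟪M.reproducingKernel hα z, T (M.reproducingKernel hα w)⟫_ℂ = ψ z * conj (kern α n (φ z) w) := by
  have hφz := hφ z.2
  rw [M.inner_reproducingKernel_left, hT _ z z.2,
    (M.emb_reproducingKernel hα w).iteratedDeriv_of_isOpen isOpen_unitDisk n hφz,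
    iteratedDeriv_kern_zero hα w.2 hφz]

theorem adjoint_eq_self_iff_kernelSymmetric [CompleteSpace H] (hα : -2 < α)
    (hφ : MapsTo φ unitDisk unitDisk)
    (hT : ∀ f : H, ∀ z ∈ unitDisk, M.emb (T f) z = ψ z * iteratedDeriv n (M.emb f) (φ z)) :
    ContinuousLinearMap.adjoint T = T ↔ KernelSymmetric (n + α + 2) n ψ φ := by
  rw [adjoint_eq_self_iff_of_total fun _ => M.eq_zero_of_inner_reproducingKernel hα,
    KernelSymmetric]
  simp only [← inner_conj_symm (T _), M.inner_reproducingKernel_apply hα hφ hT, Subtype.forall,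
    map_mul, conj_conj]
  refine forall₄_congr fun z hz w hw => ?_
  have hfact : (n.factorial : ℂ) ≠ 0 := by exact_mod_cast n.factorial_ne_zero
  have hwb : (wb2 α n : ℂ) ≠ 0 := by exact_mod_cast (wb2_pos hα n).ne'
  have hzw := kernDenom_ne_zero (n + α + 2) hw (hφ hz)
  have hwz := kernDenom_ne_zero (n + α + 2) (hφ hw) hz
  rw [conj_kern n hw (hφ hz), kern_eq, kernDenom_neg]
  field_simp

end BergmanModel

section SymmetricSymbols

variable {s : ℝ} {n : ℕ} {ψ φ g : ℂ → ℂ}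

lemma KernelSymmetric.exists_eq_pow_mul (h : KernelSymmetric s n ψ φ)
    (hψ : ∃ z ∈ unitDisk, ψ z ≠ 0) (hφc : ContinuousOn φ unitDisk)
    (hφ : MapsTo φ unitDisk unitDisk) :
    ∃ g : ℂ → ℂ, ContinuousOn g unitDisk ∧ ∀ z ∈ unitDisk, ψ z = z ^ n * g z := by
  obtain ⟨w, hw, hψw⟩ := hψ
  have hw_pow : conj w ^ n ≠ 0 := by
    have half_mem : (1 / 2 : ℂ) ∈ unitDisk := by rw [mem_unitDisk_iff]; norm_num
    have hne : ψ w * conj (1 / 2 : ℂ) ^ n * kernDenom s (φ (1 / 2)) w ≠ 0 :=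
      mul_ne_zero (mul_ne_zero hψw (by simp)) (kernDenom_ne_zero s (hφ half_mem) hw)
    rw [h w hw _ half_mem] at hne
    rw [← map_pow]
    exact (map_ne_zero _).2 (right_ne_zero_of_mul (left_ne_zero_of_mul hne))
  have hdenom (z : ℂ) (hz : z ∈ unitDisk) : conj w ^ n * kernDenom s (φ w) z ≠ 0 :=
    mul_ne_zero hw_pow (kernDenom_ne_zero s (hφ hw) hz)
  refine ⟨fun z => conj (ψ w) * kernDenom s w (φ z) / (conj w ^ n * kernDenom s (φ w) z),
    (continuousOn_const.mul (continuousOn_kernDenom continuousOn_const hφc (fun _ _ => hw) hφ)).div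
      (continuousOn_const.mul (analyticOnNhd_kernDenom s (hφ hw)).continuousOn) hdenom,
    fun z hz => ?_⟩
  rw [mul_div_assoc', eq_div_iff (hdenom z hz)]
  linear_combination h z hz w hw

lemma kernelSymmetric_iff_of_eq_pow_mul (hg : ContinuousOn g unitDisk)
    (hψ : ∀ z ∈ unitDisk, ψ z = z ^ n * g z) (hφc : ContinuousOn φ unitDisk)
    (hφ : MapsTo φ unitDisk unitDisk) :
    KernelSymmetric s n ψ φ ↔ KernelSymmetric s 0 g φ := by
  constructor <;> intro h
  · have eqOn_punctured : EqOn (fun p : ℂ × ℂ => g p.1 * kernDenom s (φ p.2) p.1)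
        (fun p => conj (g p.2) * kernDenom s p.2 (φ p.1))
        ((unitDisk \ {0}) ×ˢ (unitDisk \ {0})) := by
      rintro ⟨z, w⟩ ⟨⟨hz, hz0⟩, hw, hw0⟩
      have hzw : z ^ n * conj w ^ n ≠ 0 :=
        mul_ne_zero (pow_ne_zero n hz0) (pow_ne_zero n ((map_ne_zero _).2 hw0))
      have hsymm := h z hz w hw
      rw [hψ z hz, hψ w hw, map_mul, map_pow] at hsymm
      refine mul_left_cancel₀ hzw ?_
      linear_combination hsymm
    have fst_maps : MapsTo Prod.fst (unitDisk ×ˢ unitDisk) unitDisk := fun _ hp => hp.1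
    have snd_maps : MapsTo Prod.snd (unitDisk ×ˢ unitDisk) unitDisk := fun _ hp => hp.2
    have hφ_fst := hφc.comp continuousOn_fst fst_maps
    have hφ_snd := hφc.comp continuousOn_snd snd_maps
    have hg_conj := continuous_conj.comp_continuousOn (hg.comp continuousOn_snd snd_maps)
    have eqOn_disk := eqOn_unitDisk_prod_of_eqOn_diff_zero
      ((hg.comp continuousOn_fst fst_maps).mul
        (continuousOn_kernDenom hφ_snd continuousOn_fst (hφ.comp snd_maps) fst_maps))
      (hg_conj.mul (continuousOn_kernDenom continuousOn_snd hφ_fst snd_maps (hφ.comp fst_maps)))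
      eqOn_punctured
    intro z hz w hw
    simpa using eqOn_disk (mk_mem_prod hz hw)
  · intro z hz w hw
    rw [hψ z hz, hψ w hw, map_mul, map_pow]
    linear_combination z ^ n * conj w ^ n * h z hz w hw

lemma KernelSymmetric.exists_eq_div_kernDenom (h : KernelSymmetric s 0 g φ)
    (hφ : MapsTo φ unitDisk unitDisk) :
    ∃ r : ℝ, ∀ z ∈ unitDisk, g z = r / kernDenom s (φ 0) z := by
  have hg (z : ℂ) (hz : z ∈ unitDisk) : g z * kernDenom s (φ 0) z = conj (g 0) := by
    simpa using h z hz 0 zero_mem_unitDisk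
  have hg0 : conj (g 0) = g 0 := by simpa using (hg 0 zero_mem_unitDisk).symm
  obtain ⟨r, hr⟩ := conj_eq_iff_real.1 hg0
  refine ⟨r, fun z hz => ?_⟩
  rw [eq_div_iff (kernDenom_ne_zero s (hφ zero_mem_unitDisk) hz), hg z hz, hg0, hr]

lemma kernelSymmetric_zero_iff_of_eq_div {r : ℝ} (hr : r ≠ 0) (hφ : MapsTo φ unitDisk unitDisk)
    (hg : ∀ z ∈ unitDisk, g z = r / kernDenom s (φ 0) z) :
    KernelSymmetric s 0 g φ ↔ ∀ z ∈ unitDisk, ∀ w ∈ unitDisk,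
      kernDenom s w (φ 0) * kernDenom s (φ w) z = kernDenom s (φ 0) z * kernDenom s w (φ z) := by
  have hc := hφ zero_mem_unitDisk
  refine forall₄_congr fun z hz w hw => ?_
  have hcz := kernDenom_ne_zero s hc hz
  have hwc := kernDenom_ne_zero s hw hc
  have hrc : (r : ℂ) ≠ 0 := ofReal_ne_zero.2 hr
  rw [hg z hz, hg w hw, map_div₀, conj_kernDenom s hc hw, conj_ofReal]
  field_simp

lemma hasDerivAt_add_mul_div {c b : ℂ} :
    HasDerivAt (fun z => c + b * z / (1 - conj c * z)) b 0 := by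
  have hnum := (hasDerivAt_id (0 : ℂ)).const_mul b
  have hden := ((hasDerivAt_id (0 : ℂ)).const_mul (conj c)).const_sub 1
  simpa using (hnum.div hden (by simp)).const_add c

lemma deriv_eq_of_eq_add_mul_div {b : ℂ}
    (hφ : ∀ z ∈ unitDisk, φ z = φ 0 + b * z / (1 - conj (φ 0) * z)) : deriv φ 0 = b := by
  have hφ_nhds : φ =ᶠ[nhds 0] fun z => φ 0 + b * z / (1 - conj (φ 0) * z) := by
    filter_upwards [unitDisk_mem_nhds_zero] with z hz using hφ z hz
  rw [hφ_nhds.deriv_eq, hasDerivAt_add_mul_div.deriv]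

lemma eq_add_conj_deriv_mul_div_of_kernDenom_mul (hs : s ≠ 0) (hφd : DifferentiableAt ℂ φ 0)
    (hφ : MapsTo φ unitDisk unitDisk) {w : ℂ} (hw : w ∈ unitDisk)
    (h : ∀ z ∈ unitDisk,
      kernDenom s w (φ 0) * kernDenom s (φ w) z = kernDenom s (φ 0) z * kernDenom s w (φ z)) :
    φ w = φ 0 + conj (deriv φ 0) * w / (1 - conj (φ 0) * w) := by
  have hc := hφ zero_mem_unitDisk
  have hderiv_left := (hasDerivAt_kernDenom s (hφ hw) zero_mem_unitDisk
    (hasDerivAt_id (0 : ℂ))).const_mul (kernDenom s w (φ 0))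
  have hderiv_right := (hasDerivAt_kernDenom s hc zero_mem_unitDisk (hasDerivAt_id (0 : ℂ))).mul
    (hasDerivAt_kernDenom s hw hc hφd.hasDerivAt)
  have hderiv_eq := hderiv_left.unique <| hderiv_right.congr_of_eventuallyEq <| by
    filter_upwards [unitDisk_mem_nhds_zero] with z hz using h z hz
  simp only [id_eq, kernDenom_zero_right, mul_one, one_mul] at hderiv_eq
  have hD : kernDenom (s - 1) w (φ 0) ≠ 0 := kernDenom_ne_zero _ hw hc
  have conj_formula : (1 - conj w * φ 0) * conj (φ w) =
      (1 - conj w * φ 0) * conj (φ 0) + conj w * deriv φ 0 := by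
    rw [← kernDenom_sub_one_mul s hw hc] at hderiv_eq
    refine mul_left_cancel₀ (mul_ne_zero (ofReal_ne_zero.2 hs) hD) ?_
    linear_combination -hderiv_eq
  have formula := congrArg conj conj_formula
  simp only [map_mul, map_add, map_sub, map_one, conj_conj] at formula
  have hne := one_sub_conj_mul_ne_zero hc hw
  rw [← sub_eq_iff_eq_add', eq_div_iff hne]
  linear_combination formula

lemma kernDenom_mul_of_eq_add_mul_div {b : ℝ} (hφ : MapsTo φ unitDisk unitDisk)
    (hφb : ∀ z ∈ unitDisk, φ z = φ 0 + b * z / (1 - conj (φ 0) * z))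
    {z w : ℂ} (hz : z ∈ unitDisk) (hw : w ∈ unitDisk) :
    kernDenom s w (φ 0) * kernDenom s (φ w) z = kernDenom s (φ 0) z * kernDenom s w (φ z) := by
  have hc := hφ zero_mem_unitDisk
  have base_eq : (1 - conj w * φ 0) * (1 - conj (φ w) * z) =
      (1 - conj (φ 0) * z) * (1 - conj w * φ z) := by
    have hcz := one_sub_conj_mul_ne_zero hc hz
    have hwc := one_sub_conj_mul_ne_zero hw hc
    have conj_φ : conj (φ w) = conj (φ 0) + b * conj w / (1 - conj w * φ 0) := by
      rw [hφb w hw]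
      simp [mul_comm]
    rw [conj_φ, hφb z hz]
    field_simp
    ring
  simp only [kernDenom]
  rw [cpow_mul_cpow_of_re_pos (one_sub_conj_mul_re_pos hw hc) (one_sub_conj_mul_re_pos (hφ hw) hz),
    cpow_mul_cpow_of_re_pos (one_sub_conj_mul_re_pos hc hz) (one_sub_conj_mul_re_pos hw (hφ hz)),
    base_eq]

lemma forall_kernDenom_mul_iff (hs : s ≠ 0) (hφd : DifferentiableAt ℂ φ 0)
    (hφ : MapsTo φ unitDisk unitDisk) :
    (∀ z ∈ unitDisk, ∀ w ∈ unitDisk,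
      kernDenom s w (φ 0) * kernDenom s (φ w) z = kernDenom s (φ 0) z * kernDenom s w (φ z)) ↔
    ∃ b : ℝ, ∀ z ∈ unitDisk, φ z = φ 0 + b * z / (1 - conj (φ 0) * z) := by
  refine ⟨fun h => ?_, fun ⟨b, hb⟩ z hz w hw => kernDenom_mul_of_eq_add_mul_div hφ hb hz hw⟩
  have hφ_eq (w : ℂ) (hw : w ∈ unitDisk) :=
    eq_add_conj_deriv_mul_div_of_kernDenom_mul hs hφd hφ hw fun z hz => h z hz w hw
  obtain ⟨b, hb⟩ := conj_eq_iff_real.1 (deriv_eq_of_eq_add_mul_div hφ_eq).symm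
  exact ⟨b, by simpa only [hb, conj_ofReal] using hφ_eq⟩

theorem kernelSymmetric_iff (hs : s ≠ 0) (hψ : ∃ z ∈ unitDisk, ψ z ≠ 0)
    (hφa : AnalyticOnNhd ℂ φ unitDisk) (hφ : MapsTo φ unitDisk unitDisk) :
    KernelSymmetric s n ψ φ ↔ ∃ r b : ℝ, r ≠ 0 ∧
      (∀ z ∈ unitDisk, ψ z = z ^ n * (r / kernDenom s (φ 0) z)) ∧
      ∀ z ∈ unitDisk, φ z = φ 0 + b * z / (1 - conj (φ 0) * z) := by
  have hφd := (hφa 0 zero_mem_unitDisk).differentiableAt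
  have hc := hφ zero_mem_unitDisk
  constructor
  · intro h
    obtain ⟨g, hgc, hψg⟩ := h.exists_eq_pow_mul hψ hφa.continuousOn hφ
    have hg_symm := (kernelSymmetric_iff_of_eq_pow_mul hgc hψg hφa.continuousOn hφ).1 h
    obtain ⟨r, hg⟩ := hg_symm.exists_eq_div_kernDenom hφ
    have hr : r ≠ 0 := by
      rintro rfl
      obtain ⟨z, hz, hψz⟩ := hψ
      simp [hψg z hz, hg z hz] at hψz
    obtain ⟨b, hb⟩ := (forall_kernDenom_mul_iff hs hφd hφ).1
      ((kernelSymmetric_zero_iff_of_eq_div hr hφ hg).1 hg_symm)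
    exact ⟨r, b, hr, fun z hz => by rw [hψg z hz, hg z hz], hb⟩
  · rintro ⟨r, b, hr, hψr, hb⟩
    have hgc : ContinuousOn (fun z => r / kernDenom s (φ 0) z) unitDisk := continuousOn_const.div
      (analyticOnNhd_kernDenom s hc).continuousOn fun z hz => kernDenom_ne_zero s hc hz
    rw [kernelSymmetric_iff_of_eq_pow_mul hgc hψr hφa.continuousOn hφ,
      kernelSymmetric_zero_iff_of_eq_div hr hφ fun _ _ => rfl]
    exact (forall_kernDenom_mul_iff hs hφd hφ).2 ⟨b, hb⟩

lemma iteratedDeriv_eq_of_eq_pow_mul_div {r c : ℂ} (hc : c ∈ unitDisk)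
    (hψ : ∀ z ∈ unitDisk, ψ z = z ^ n * (r / kernDenom s c z)) :
    iteratedDeriv n ψ 0 = n.factorial * r := by
  have hψ_nhds : ψ =ᶠ[nhds 0] fun z => z ^ n * (r / kernDenom s c z) := by
    filter_upwards [unitDisk_mem_nhds_zero] with z hz using hψ z hz
  have hanalytic : AnalyticAt ℂ (fun z => r / kernDenom s c z) 0 :=
    analyticAt_const.div (analyticOnNhd_kernDenom s hc 0 zero_mem_unitDisk) (by simp)
  rw [hψ_nhds.iteratedDeriv_eq, iteratedDeriv_pow_mul_zero hanalytic.contDiffAt]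
  simp

end SymmetricSymbols

theorem stmt_12_general (α : ℝ) (hα : -2 < α) (n : ℕ)
    (H : Type) [NormedAddCommGroup H] [InnerProductSpace ℂ H] [CompleteSpace H]
    (M : BergmanModel α H)
    (ψ : ℂ → ℂ) (hψ0 : ∃ z ∈ unitDisk, ψ z ≠ 0)
    (φ : ℂ → ℂ) (hφa : AnalyticOnNhd ℂ φ unitDisk)
    (hφm : ∀ z ∈ unitDisk, φ z ∈ unitDisk)
    (hφnc : ∃ z ∈ unitDisk, ∃ w ∈ unitDisk, φ z ≠ φ w)
    (T : H →L[ℂ] H)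
    (hT : ∀ f : H, ∀ z ∈ unitDisk,
      M.emb (T f) z = ψ z * iteratedDeriv n (M.emb f) (φ z)) :
    ContinuousLinearMap.adjoint T = T ↔
      (∃ a b : ℝ, a ≠ 0 ∧ b ≠ 0 ∧
        iteratedDeriv n ψ 0 = (a : ℂ) ∧ deriv φ 0 = (b : ℂ) ∧
        (∀ z ∈ unitDisk, ψ z = (a : ℂ) * z ^ n /
          ((n.factorial : ℂ) * (1 - (starRingEnd ℂ) (φ 0) * z) ^ ((n : ℂ) + (α : ℂ) + 2))) ∧
        (∀ z ∈ unitDisk, φ z = φ 0 + (b : ℂ) * z / (1 - (starRingEnd ℂ) (φ 0) * z))) := by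
  have hs : (n : ℝ) + α + 2 ≠ 0 := by linarith [(n.cast_nonneg : (0 : ℝ) ≤ n)]
  have hc := hφm 0 zero_mem_unitDisk
  have hfact : (n.factorial : ℂ) ≠ 0 := Nat.cast_ne_zero.2 n.factorial_ne_zero
  have denom_eq (z : ℂ) : (1 - conj (φ 0) * z) ^ ((n : ℂ) + α + 2) =
      kernDenom (n + α + 2) (φ 0) z := by simp [kernDenom]
  rw [M.adjoint_eq_self_iff_kernelSymmetric hα hφm hT, kernelSymmetric_iff hs hψ0 hφa hφm]
  simp only [denom_eq]
  constructor
  · rintro ⟨r, b, hr, hψ, hφ⟩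
    have hb : b ≠ 0 := by
      rintro rfl
      obtain ⟨z, hz, w, hw, hne⟩ := hφnc
      exact hne (by rw [hφ z hz, hφ w hw]; simp)
    refine ⟨n.factorial * r, b, mul_ne_zero (by exact_mod_cast hfact) hr, hb, ?_,
      deriv_eq_of_eq_add_mul_div hφ, fun z hz => ?_, hφ⟩
    · simpa using iteratedDeriv_eq_of_eq_pow_mul_div hc hψ
    · rw [hψ z hz, ofReal_mul, ofReal_natCast]
      field_simp
  · rintro ⟨a, b, ha, -, -, -, hψ, hφ⟩
    refine ⟨a / n.factorial, b, div_ne_zero ha (by exact_mod_cast hfact), fun z hz => ?_, hφ⟩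
    rw [hψ z hz, ofReal_div, ofReal_natCast]
    field_simp

/-- A bounded operator `D_{ψ,φ,n}` on `A_α²` is self-adjoint iff
`ψ(z) = a z^n/(n!(1-conj(c)z)^{n+α+2})` and `φ(z) = c + bz/(1-conj(c)z)`, where
`a = ψ⁽ⁿ⁾(0)` and `b = φ'(0)` are both nonzero real numbers and `c = φ(0) ∈ 𝔻`. -/
theorem stmt_12 (α : ℝ) (hα : -1 < α) (n : ℕ) (hn : 1 ≤ n)
    (H : Type) [NormedAddCommGroup H] [InnerProductSpace ℂ H] [CompleteSpace H]
    (M : BergmanModel α H)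
    (ψ : ℂ → ℂ) (hψa : AnalyticOnNhd ℂ ψ unitDisk)
    (hψ0 : ∃ z ∈ unitDisk, ψ z ≠ 0)
    (φ : ℂ → ℂ) (hφa : AnalyticOnNhd ℂ φ unitDisk)
    (hφm : ∀ z ∈ unitDisk, φ z ∈ unitDisk)
    (hφnc : ∃ z ∈ unitDisk, ∃ w ∈ unitDisk, φ z ≠ φ w)
    (T : H →L[ℂ] H)
    (hT : ∀ f : H, ∀ z ∈ unitDisk,
      M.emb (T f) z = ψ z * iteratedDeriv n (M.emb f) (φ z)) :
    ContinuousLinearMap.adjoint T = T ↔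
      (∃ a b : ℝ, a ≠ 0 ∧ b ≠ 0 ∧
        iteratedDeriv n ψ 0 = (a : ℂ) ∧ deriv φ 0 = (b : ℂ) ∧
        (∀ z ∈ unitDisk, ψ z = (a : ℂ) * z ^ n /
          ((n.factorial : ℂ) * (1 - (starRingEnd ℂ) (φ 0) * z) ^ ((n : ℂ) + (α : ℂ) + 2))) ∧
        (∀ z ∈ unitDisk, φ z = φ 0 + (b : ℂ) * z / (1 - (starRingEnd ℂ) (φ 0) * z))) :=
  stmt_12_general α (by linarith) n H M ψ hψ0 φ hφa hφm hφnc T hT
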